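/- Let φ be an upper semi-continuous function on a bounded domain U × D ⊂ ℂ^{n−k} × ℂᵏ such that e^{−φ} is locally integrable on U × D (i.e., I(φ) = O). Then for almost every z'' ∈ D the following holds: for every relatively compact open subset V ⋐ U and every nonnegative continuous function P on cl(V) × D, one has ∫_V P(w',z'') e^{−φ(w',z'')} dλ_{n−k}(w') < ∞, and lim_{ε→0} (1/λ_k(B(z'',ε))) ∫_{B(z'',ε)} ∫_V P(w',w'') |e^{−φ(w',w'')} − e^{−φ(w',z'')}| dλ_{n−k}(w') dλ_k(w'') = 0. -/

import Mathlib

open MeasureTheory Metric ENNReal Filter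

/-! The function `f = e^{-φ}` is integrable on `K × L` for compact `K ⊆ U` and `L ⊆ D`, so
`z ↦ f(·, z)` is a Bochner integrable map from `L` to `L¹(K)`. Almost every `z` is a Lebesgue point
of this map, and the `L¹` distance of two of its values is `∫_K |f(w', w) - f(w', z)|`. Countably
many such `K` and `L` exhaust `U` and `D`, which gives a null set that does not depend on `V`; the
weight `P` is bounded near `cl(V) × {z}` by compactness, so it only costs a constant. -/

open scoped NNReal Topology

theorem measurable_of_measurable_edist {α Y : Type*} [MeasurableSpace α] [PseudoEMetricSpace Y]
    [SecondCountableTopology Y] [MeasurableSpace Y] [BorelSpace Y] {f : α → Y}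
    (hf : ∀ y, Measurable fun a ↦ edist (f a) y) : Measurable f := by
  have hbasis : TopologicalSpace.IsTopologicalBasis {b : Set Y | ∃ y r, eball y r = b} := by
    refine TopologicalSpace.isTopologicalBasis_of_isOpen_of_nhds ?_ fun y u hy hu ↦ ?_
    · rintro _ ⟨y, r, rfl⟩
      exact isOpen_eball
    · obtain ⟨r, hr, hru⟩ := EMetric.isOpen_iff.1 hu y hy
      exact ⟨_, ⟨y, r, rfl⟩, mem_eball_self hr, hru⟩
  rw [BorelSpace.measurable_eq (α := Y), hbasis.borel_eq_generateFrom]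
  refine measurable_generateFrom ?_
  rintro _ ⟨y, r, rfl⟩
  exact measurableSet_lt (hf y) measurable_const

section FiberL1

variable {α β F : Type*} [MeasurableSpace α] [NormedAddCommGroup F] {μ : Measure α}
  {g : α × β → F}

open Classical in
/-- The `L¹(μ)`-valued map `z ↦ g(·, z)` attached to a function `g` of two variables, with value
`0` at those `z` for which the fiber function `g(·, z)` is not integrable. -/
noncomputable def fiberL1 (μ : Measure α) (g : α × β → F) (z : β) : α →₁[μ] F :=
  if h : Integrable (fun x ↦ g (x, z)) μ then h.toL1 _ else 0

theorem fiberL1_of_integrable {z : β} (h : Integrable (fun x ↦ g (x, z)) μ) :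
    fiberL1 μ g z = h.toL1 _ :=
  dif_pos h

theorem fiberL1_of_not_integrable {z : β} (h : ¬Integrable (fun x ↦ g (x, z)) μ) :
    fiberL1 μ g z = 0 :=
  dif_neg h

theorem edist_fiberL1 {z w : β} (hz : Integrable (fun x ↦ g (x, z)) μ)
    (hw : Integrable (fun x ↦ g (x, w)) μ) :
    edist (fiberL1 μ g z) (fiberL1 μ g w) = ∫⁻ x, ‖g (x, z) - g (x, w)‖ₑ ∂μ := by
  simp only [fiberL1_of_integrable hz, fiberL1_of_integrable hw, Integrable.edist_toL1_toL1,
    ← edist_eq_enorm_sub]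

theorem enorm_fiberL1_le (z : β) : ‖fiberL1 μ g z‖ₑ ≤ ∫⁻ x, ‖g (x, z)‖ₑ ∂μ := by
  by_cases h : Integrable (fun x ↦ g (x, z)) μ
  · rw [fiberL1_of_integrable h, ← edist_zero_right, Integrable.edist_toL1_zero]
    simp only [edist_zero_right, le_refl]
  · simp only [fiberL1_of_not_integrable h, enorm_zero, zero_le]

variable [MeasurableSpace β] {ν : Measure β}

theorem ae_ae_of_ae_prod_left [SFinite μ] [SFinite ν] {p : α × β → Prop}
    (h : ∀ᵐ q ∂μ.prod ν, p q) : ∀ᵐ z ∂ν, ∀ᵐ x ∂μ, p (x, z) :=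
  Measure.ae_ae_of_ae_prod (Measure.measurePreserving_swap.quasiMeasurePreserving.ae h)

theorem fiberL1_congr_ae [SFinite μ] [SFinite ν] {g' : α × β → F} (h : g =ᵐ[μ.prod ν] g') :
    fiberL1 μ g =ᵐ[ν] fiberL1 μ g' := by
  filter_upwards [ae_ae_of_ae_prod_left h] with z hz
  by_cases hg : Integrable (fun x ↦ g (x, z)) μ
  · rw [fiberL1_of_integrable hg, fiberL1_of_integrable (hg.congr hz)]
    exact (Integrable.toL1_eq_toL1_iff ..).2 hz
  · rw [fiberL1_of_not_integrable hg, fiberL1_of_not_integrable (mt (integrable_congr hz).2 hg)]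

variable [SFinite μ] [IsSeparable μ] [TopologicalSpace.SeparableSpace F]

theorem stronglyMeasurable_fiberL1 (hg : StronglyMeasurable g) :
    StronglyMeasurable (fiberL1 μ g) := by
  have : Fact ((1 : ℝ≥0∞) ≠ ⊤) := ⟨ENNReal.one_ne_top⟩
  let : MeasurableSpace (α →₁[μ] F) := borel _
  have : BorelSpace (α →₁[μ] F) := ⟨rfl⟩
  refine (measurable_of_measurable_edist fun u ↦ ?_).stronglyMeasurable
  have h_meas : MeasurableSet {z | Integrable (fun x ↦ g (x, z)) μ} :=
    measurableSet_integrable (f := fun z x ↦ g (x, z)) (hg.comp_measurable measurable_swap)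
  refine measurable_of_restrict_of_restrict_compl h_meas ?_ ?_
  · have hu : StronglyMeasurable fun p : α × β ↦ u p.1 :=
      (Lp.stronglyMeasurable u).comp_measurable measurable_fst
    have hdist : Measurable fun z ↦ ∫⁻ x, edist (g (x, z)) (u x) ∂μ :=
      (hg.edist hu).measurable.lintegral_prod_left'
    convert! hdist.comp measurable_subtype_coe using 1
    funext ⟨z, hz⟩
    rw [Set.domRestrict_apply, fiberL1_of_integrable hz, L1.edist_def]
    refine lintegral_congr_ae ?_
    filter_upwards [Integrable.coeFn_toL1 hz] with x hx
    simp only [hx]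
  · convert! (measurable_const : Measurable fun _ ↦ edist 0 u) using 1
    funext ⟨z, hz⟩
    rw [Set.domRestrict_apply, fiberL1_of_not_integrable hz]

theorem integrable_fiberL1 [SFinite ν] (hg : Integrable g (μ.prod ν)) :
    Integrable (fiberL1 μ g) ν := by
  refine ⟨⟨_, stronglyMeasurable_fiberL1 hg.1.stronglyMeasurable_mk,
    fiberL1_congr_ae hg.1.ae_eq_mk⟩, (lintegral_mono enorm_fiberL1_le).trans_lt ?_⟩
  rw [← lintegral_prod_symm _ hg.1.enorm]
  exact hg.2

end FiberL1

/-- The absolute difference `|a - b|` on `ℝ≥0∞`, where subtraction is truncated. -/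
noncomputable def absDiff (a b : ℝ≥0∞) : ℝ≥0∞ := (a - b) + (b - a)

theorem absDiff_eq_enorm_toReal_sub {a b : ℝ≥0∞} (ha : a ≠ ⊤) (hb : b ≠ ⊤) :
    absDiff a b = ‖a.toReal - b.toReal‖ₑ := by
  wlog h : a ≤ b generalizing a b
  · rw [absDiff, add_comm, ← absDiff, this hb ha (le_of_not_ge h), ← enorm_neg, neg_sub]
  · rw [absDiff, tsub_eq_zero_of_le h, zero_add, ← enorm_neg, neg_sub,
      Real.enorm_of_nonneg (sub_nonneg.2 (ENNReal.toReal_mono hb h)),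
      ENNReal.ofReal_sub _ toReal_nonneg, ENNReal.ofReal_toReal ha, ENNReal.ofReal_toReal hb]

theorem tendsto_measure_ball_div_of_closedBall {β : Type*} [PseudoMetricSpace β]
    [MeasurableSpace β] {ρ ν : Measure β} {z : β}
    (h : Tendsto (fun ε ↦ ρ (closedBall z ε) / ν (closedBall z ε)) (𝓝[>] 0) (𝓝 0)) :
    Tendsto (fun ε ↦ ρ (ball z ε) / ν (ball z ε)) (𝓝[>] 0) (𝓝 0) := by
  refine ENNReal.tendsto_nhds_zero.2 fun δ hδ ↦ ?_
  obtain rfl | hδ_top := eq_or_ne δ ⊤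
  · exact Eventually.of_forall fun _ ↦ le_top
  obtain ⟨r, hr, hclosed⟩ := mem_nhdsGT_iff_exists_Ioo_subset.1 (ENNReal.tendsto_nhds_zero.1 h δ hδ)
  filter_upwards [Ioo_mem_nhdsGT hr] with ε hε
  obtain ⟨u, hu_mono, hu_mem, hu_lim⟩ := exists_seq_strictMono_tendsto' hε.1
  have hball : ball z ε = ⋃ n, closedBall z (u n) := by
    ext w
    simp only [mem_ball, Set.mem_iUnion, mem_closedBall]
    refine ⟨fun hw ↦ ?_, fun ⟨n, hn⟩ ↦ hn.trans_lt (hu_mem n).2⟩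
    exact (hu_lim.eventually_const_le hw).exists
  refine ENNReal.div_le_of_le_mul ?_
  have hmono : Monotone fun n ↦ closedBall z (u n) := fun _ _ hmn ↦
    closedBall_subset_closedBall (hu_mono.monotone hmn)
  rw [hball, hmono.measure_iUnion, ← hball]
  refine iSup_le fun n ↦ ?_
  calc ρ (closedBall z (u n)) ≤ δ * ν (closedBall z (u n)) :=
        (ENNReal.div_le_iff_le_mul (Or.inr hδ_top) (Or.inr hδ.ne')).1
          (hclosed ⟨(hu_mem n).1, (hu_mem n).2.trans hε.2⟩)
    _ ≤ δ * ν (ball z ε) := by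
        gcongr
        exact closedBall_subset_ball (hu_mem n).2

section LebesguePoints

variable {α β : Type*} [MeasurableSpace α] {μ : Measure α} [SFinite μ] [IsSeparable μ]
  [MetricSpace β] [SecondCountableTopology β] [MeasurableSpace β] [BorelSpace β] {ν : Measure β}
  [IsLocallyFiniteMeasure ν]

theorem ae_tendsto_lintegral_lintegral_enorm_sub_div {F : Type*}
    [NormedAddCommGroup F] [TopologicalSpace.SeparableSpace F] (v : VitaliFamily ν) {g : α × β → F}
    (hg : Integrable g (μ.prod ν)) :
    ∀ᵐ z ∂ν, Tendsto (fun a ↦ (∫⁻ w in a, ∫⁻ x, ‖g (x, w) - g (x, z)‖ₑ ∂μ ∂ν) / ν a)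
      (v.filterAt z) (𝓝 0) := by
  filter_upwards [v.ae_tendsto_lintegral_enorm_sub_div_of_integrable (integrable_fiberL1 hg),
    hg.prod_left_ae] with z hlim hz
  refine hlim.congr fun a ↦ ?_
  congr 1
  refine lintegral_congr_ae (ae_restrict_of_ae ?_)
  filter_upwards [hg.prod_left_ae] with w hw
  rw [← edist_eq_enorm_sub, edist_fiberL1 hw hz]

theorem ae_tendsto_lintegral_ball_absDiff_div [HasBesicovitchCovering β]
    {f : α × β → ℝ≥0∞}
    (hf : Integrable f (μ.prod ν)) :
    ∀ᵐ z ∂ν, ∫⁻ x, f (x, z) ∂μ < ⊤ ∧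
      Tendsto (fun ε ↦ (∫⁻ w in ball z ε, ∫⁻ x, absDiff (f (x, w)) (f (x, z)) ∂μ ∂ν) /
        ν (ball z ε)) (𝓝[>] 0) (𝓝 0) := by
  have hf_meas : AEMeasurable f (μ.prod ν) := hf.1.aemeasurable
  have hf_int : ∫⁻ p, f p ∂μ.prod ν ≠ ⊤ := hf.2.ne
  have hfin : ∀ᵐ z ∂ν, ∀ᵐ x ∂μ, f (x, z) < ⊤ := ae_ae_of_ae_prod_left (ae_lt_top' hf_meas hf_int)
  have hfiber : ∀ᵐ z ∂ν, ∫⁻ x, f (x, z) ∂μ < ⊤ := by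
    rw [lintegral_prod_symm _ hf_meas] at hf_int
    exact ae_lt_top' hf_meas.lintegral_prod_left' hf_int
  filter_upwards [hfiber, hfin, ae_tendsto_lintegral_lintegral_enorm_sub_div
    (Besicovitch.vitaliFamily ν) (integrable_toReal_of_lintegral_ne_top hf_meas hf_int)]
    with z hz hz_fin hlim
  refine ⟨hz, ?_⟩
  have habs : ∀ᵐ w ∂ν, ∫⁻ x, ‖(f (x, w)).toReal - (f (x, z)).toReal‖ₑ ∂μ =
      ∫⁻ x, absDiff (f (x, w)) (f (x, z)) ∂μ := by
    filter_upwards [hfin] with w hw_fin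
    refine lintegral_congr_ae ?_
    filter_upwards [hz_fin, hw_fin] with x hxz hxw
    exact (absDiff_eq_enorm_toReal_sub hxw.ne hxz.ne).symm
  have hclosed := hlim.comp (Besicovitch.tendsto_filterAt ν z)
  simp only [Function.comp_def, lintegral_congr_ae (ae_restrict_of_ae habs),
    ← withDensity_apply _ measurableSet_closedBall] at hclosed
  simpa only [withDensity_apply _ measurableSet_ball] using
    tendsto_measure_ball_div_of_closedBall hclosed

end LebesguePoints

theorem exists_compact_exhaustion_of_isOpen {X : Type*} [TopologicalSpace X]
    [LocallyCompactSpace X] [SecondCountableTopology X] {U : Set X} (hU : IsOpen U) :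
    ∃ K : ℕ → Set X, (∀ n, IsCompact (K n) ∧ K n ⊆ U) ∧
      ∀ L, IsCompact L → L ⊆ U → ∃ n, L ⊆ interior (K n) := by
  have : LocallyCompactSpace U := hU.locallyCompactSpace
  let K : CompactExhaustion U := default
  refine ⟨fun n ↦ Subtype.val '' K n, fun n ↦ ⟨(K.isCompact n).image continuous_subtype_val,
    Subtype.coe_image_subset U (K n)⟩, fun L hL hLU ↦ ?_⟩
  obtain ⟨n, hn⟩ := K.exists_superset_of_isCompact
    (Topology.IsInducing.subtypeVal.isCompact_preimage' hL (by simpa using hLU))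
  refine ⟨n + 1, interior_maximal (Set.image_mono interior_subset)
    (hU.isOpenMap_subtype_val _ isOpen_interior) |>.trans' ?_⟩
  intro x hx
  exact ⟨⟨x, hLU hx⟩, K.subset_interior_succ n (hn hx), rfl⟩

theorem setLIntegral_mul_le_of_forall_le {α : Type*} [MeasurableSpace α] {μ : Measure α}
    {s t : Set α} (hst : s ⊆ t) (ht : MeasurableSet t) {p h : α → ℝ≥0∞} {C : ℝ≥0}
    (hp : ∀ x ∈ t, p x ≤ C) : ∫⁻ x in s, p x * h x ∂μ ≤ C * ∫⁻ x in t, h x ∂μ :=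
  calc ∫⁻ x in s, p x * h x ∂μ ≤ ∫⁻ x in t, p x * h x ∂μ := lintegral_mono_set hst
    _ ≤ ∫⁻ x in t, C * h x ∂μ :=
        setLIntegral_mono' ht fun x hx ↦ mul_le_mul_left (hp x hx) (h x)
    _ = C * ∫⁻ x in t, h x ∂μ := lintegral_const_mul' _ _ ENNReal.coe_ne_top

section SiuTypeLemma

variable {X E : Type*} [TopologicalSpace X] [LocallyCompactSpace X] [SecondCountableTopology X]
  [MeasurableSpace X] [BorelSpace X] {μ : Measure X} [SFinite μ]
  [MetricSpace E] [LocallyCompactSpace E] [SecondCountableTopology E] [HasBesicovitchCovering E]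
  [MeasurableSpace E] [BorelSpace E] {ν : Measure E} [IsLocallyFiniteMeasure ν]
  {U : Set X} {D : Set E} {f : X × E → ℝ≥0∞}

theorem ae_restrict_tendsto_lintegral_ball_setLIntegral_absDiff_div (hU : IsOpen U)
    (hD : IsOpen D) (hf : LocallyIntegrableOn f (U ×ˢ D) (μ.prod ν)) :
    ∀ᵐ z ∂ν.restrict D, ∀ K ⊆ U, IsCompact K →
      ∫⁻ x in K, f (x, z) ∂μ < ⊤ ∧
        Tendsto (fun ε ↦ (∫⁻ w in ball z ε, ∫⁻ x in K, absDiff (f (x, w)) (f (x, z)) ∂μ ∂ν) /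
          ν (ball z ε)) (𝓝[>] 0) (𝓝 0) := by
  obtain ⟨K, hK, hK_exh⟩ := exists_compact_exhaustion_of_isOpen hU
  obtain ⟨L, hL, hL_exh⟩ := exists_compact_exhaustion_of_isOpen hD
  have h_int (m n : ℕ) : Integrable f ((μ.restrict (K m)).prod (ν.restrict (L n))) := by
    rw [Measure.prod_restrict]
    exact hf.integrableOn_compact_subset (Set.prod_mono (hK m).2 (hL n).2)
      ((hK m).1.prod (hL n).1)
  have hLebesgue := fun m n ↦
    ae_imp_of_ae_restrict (ae_tendsto_lintegral_ball_absDiff_div (h_int m n))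
  filter_upwards [ae_restrict_of_ae (ae_all_iff.2 fun m ↦ ae_all_iff.2 (hLebesgue m)),
    ae_restrict_mem hD.measurableSet] with z hz hzD A hAU hA
  obtain ⟨m, hAm⟩ := hK_exh A hA hAU
  obtain ⟨n, hzn⟩ := hL_exh {z} isCompact_singleton (Set.singleton_subset_iff.2 hzD)
  have hAK : A ⊆ K m := hAm.trans interior_subset
  have hLz : L n ∈ 𝓝 z := mem_interior_iff_mem_nhds.1 (hzn rfl)
  obtain ⟨hfin, hlim⟩ := hz m n (mem_of_mem_nhds hLz)
  refine ⟨(lintegral_mono_set hAK).trans_lt hfin, ?_⟩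
  refine tendsto_of_tendsto_of_tendsto_of_le_of_le' tendsto_const_nhds hlim
    (Eventually.of_forall fun _ ↦ zero_le) ?_
  obtain ⟨r, hr, hrL⟩ := Metric.mem_nhds_iff.1 hLz
  filter_upwards [Ioo_mem_nhdsGT hr] with ε hε
  have hball : ball z ε ⊆ L n := (ball_subset_ball hε.2.le).trans hrL
  rw [Measure.restrict_restrict_of_subset hball, Measure.restrict_eq_self _ hball]
  gcongr

theorem siu_type_lemma_general (hU : IsOpen U) (hD : IsOpen D)
    (hf : LocallyIntegrableOn f (U ×ˢ D) (μ.prod ν)) :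
    ∀ᵐ z ∂ν.restrict D, ∀ V : Set X, closure V ⊆ U → IsCompact (closure V) →
      ∀ P : X × E → ℝ≥0, ContinuousOn P (closure V ×ˢ D) →
        ∫⁻ x in V, P (x, z) * f (x, z) ∂μ < ⊤ ∧
          Tendsto (fun ε ↦ (ν (ball z ε))⁻¹ *
            ∫⁻ w in ball z ε, ∫⁻ x in V, P (x, w) * absDiff (f (x, w)) (f (x, z)) ∂μ ∂ν)
            (𝓝[>] 0) (𝓝 0) := by
  filter_upwards [ae_restrict_tendsto_lintegral_ball_setLIntegral_absDiff_div hU hD hf,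
    ae_restrict_mem hD.measurableSet] with z hz hzD V hVU hV P hP
  obtain ⟨hfin, hlim⟩ := hz (closure V) hVU hV
  obtain ⟨L, hL_nhds, hLD, hL⟩ := local_compact_nhds (hD.mem_nhds hzD)
  obtain ⟨C, hC⟩ := (hV.prod hL).bddAbove_image (hP.mono (Set.prod_mono_right hLD))
  have hPC : ∀ w ∈ L, ∀ x ∈ closure V, (P (x, w) : ℝ≥0∞) ≤ C := fun w hw x hx ↦
    ENNReal.coe_le_coe.2 (hC ⟨_, ⟨hx, hw⟩, rfl⟩)
  have hweight (w : E) (hw : w ∈ L) (h : X → ℝ≥0∞) :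
      ∫⁻ x in V, P (x, w) * h x ∂μ ≤ C * ∫⁻ x in closure V, h x ∂μ :=
    setLIntegral_mul_le_of_forall_le subset_closure measurableSet_closure (hPC w hw)
  refine ⟨(hweight z (mem_of_mem_nhds hL_nhds) _).trans_lt
    (ENNReal.mul_lt_top ENNReal.coe_lt_top hfin), ?_⟩
  have hlimC := ENNReal.Tendsto.const_mul hlim (Or.inr (ENNReal.coe_ne_top (r := C)))
  rw [mul_zero] at hlimC
  refine tendsto_of_tendsto_of_tendsto_of_le_of_le' tendsto_const_nhds hlimC
    (Eventually.of_forall fun _ ↦ zero_le) ?_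
  obtain ⟨r, hr, hrL⟩ := Metric.mem_nhds_iff.1 hL_nhds
  filter_upwards [Ioo_mem_nhdsGT hr] with ε hε
  have hball : ball z ε ⊆ L := (ball_subset_ball hε.2.le).trans hrL
  rw [ENNReal.div_eq_inv_mul, mul_left_comm, ← lintegral_const_mul' _ _ ENNReal.coe_ne_top]
  refine mul_le_mul_right ?_ _
  exact setLIntegral_mono' measurableSet_ball fun w hw ↦ hweight w (hball hw) _

end SiuTypeLemma

theorem aemeasurable_restrict_exp_neg_of_upperSemicontinuousOn {Z : Type*} [TopologicalSpace Z]
    [MeasurableSpace Z] [OpensMeasurableSpace Z] {ρ : Measure Z} {S : Set Z}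
    (hS : MeasurableSet S) {φ : Z → EReal} (hφ : UpperSemicontinuousOn φ S) :
    AEMeasurable (fun p ↦ EReal.exp (-φ p)) (ρ.restrict S) :=
  (aemeasurable_restrict_iff_comap_subtype hS).2 <| Measurable.aemeasurable <|
    EReal.measurable_exp.comp (upperSemicontinuousOn_iff_restrict.2 hφ).measurable.neg

theorem locallyIntegrableOn_exp_neg_of_upperSemicontinuousOn {Z : Type*} [TopologicalSpace Z]
    [MeasurableSpace Z] [OpensMeasurableSpace Z] {ρ : Measure Z} {S : Set Z}
    (hS : MeasurableSet S) {φ : Z → EReal} (hφ : UpperSemicontinuousOn φ S)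
    (hloc : ∀ p ∈ S, ∃ W ∈ 𝓝 p, ∫⁻ w in W, EReal.exp (-φ w) ∂ρ < ⊤) :
    LocallyIntegrableOn (fun p ↦ EReal.exp (-φ p)) S ρ := by
  intro p hp
  obtain ⟨W, hW, hW_fin⟩ := hloc p hp
  refine ⟨W ∩ S, inter_mem (mem_nhdsWithin_of_mem_nhds hW) self_mem_nhdsWithin, ?_, ?_⟩
  · exact ((aemeasurable_restrict_exp_neg_of_upperSemicontinuousOn hS hφ).mono_measure
      (Measure.restrict_mono_set ρ Set.inter_subset_right)).aestronglyMeasurable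
  · exact (lintegral_mono_set Set.inter_subset_left).trans_lt hW_fin

/-- **Siu-type lemma.** Let `φ` be an upper semi-continuous `[−∞,∞)`-valued function on a
bounded domain `U × D ⊂ ℂ^{n−k} × ℂᵏ` (identifying `ℂᵐ ≅ ℝ^{2m}`) such that `e^{−φ}` is
locally integrable on `U × D` (i.e. `I(φ) = O`). Then for almost every `z'' ∈ D`: for
every relatively compact open `V ⋐ U` and every nonnegative continuous `P` on
`cl(V) × D`, `∫_V P(w',z'') e^{−φ(w',z'')} dλ(w') < ∞` and
`lim_{ε→0} (1/λ(B(z'',ε))) ∫_{B(z'',ε)} ∫_V P(w',w'') |e^{−φ(w',w'')} − e^{−φ(w',z'')}| = 0`. -/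
theorem siu_type_lemma (n k : ℕ) (hk : 1 ≤ k) (hkn : k ≤ n)
    (U : Set (EuclideanSpace ℝ (Fin (2 * (n - k)))))
    (D : Set (EuclideanSpace ℝ (Fin (2 * k))))
    (hU : IsOpen U) (hD : IsOpen D)
    (hUb : Bornology.IsBounded U) (hDb : Bornology.IsBounded D)
    (φ : EuclideanSpace ℝ (Fin (2 * (n - k))) × EuclideanSpace ℝ (Fin (2 * k)) → EReal)
    (hφtop : ∀ p, φ p < ⊤)
    (hφusc : UpperSemicontinuousOn φ (U ×ˢ D))
    (hloc : ∀ p ∈ U ×ˢ D, ∃ W ∈ nhds p, (∫⁻ w in W, EReal.exp (-(φ w)) ∂volume) < ⊤) :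
    ∀ᵐ z'' ∂(volume.restrict D),
      ∀ V : Set (EuclideanSpace ℝ (Fin (2 * (n - k)))),
        IsOpen V → closure V ⊆ U → IsCompact (closure V) →
        ∀ P : EuclideanSpace ℝ (Fin (2 * (n - k))) × EuclideanSpace ℝ (Fin (2 * k)) → ℝ,
          ContinuousOn P (closure V ×ˢ D) → (∀ p ∈ closure V ×ˢ D, 0 ≤ P p) →
          ((∫⁻ w' in V, ENNReal.ofReal (P (w', z'')) * EReal.exp (-(φ (w', z''))) ∂volume) < ⊤ ∧
           Tendsto (fun ε : ℝ =>
              (volume (ball z'' ε))⁻¹ *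
                ∫⁻ w'' in ball z'' ε,
                  ∫⁻ w' in V, ENNReal.ofReal (P (w', w'')) *
                    ((EReal.exp (-(φ (w', w''))) - EReal.exp (-(φ (w', z'')))) +
                     (EReal.exp (-(φ (w', z''))) - EReal.exp (-(φ (w', w''))))) ∂volume ∂volume)
            (nhdsWithin 0 (Set.Ioi 0)) (nhds 0)) :=
  (siu_type_lemma_general hU hD <| locallyIntegrableOn_exp_neg_of_upperSemicontinuousOn
    (hU.prod hD).measurableSet hφusc hloc).mono fun _ h V _ hVU hV P hP _ ↦
      h V hVU hV (fun p ↦ (P p).toNNReal) (continuous_real_toNNReal.comp_continuousOn hP)
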